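/- Let p > 3 be a prime, and define F(n,k) = (6n-2k+1)/2^{8n-2k} · C(2n,n)·C(2n+2k,n+k)·C(2n-2k,n-k)·C(n+k,n) / C(2k,k) for integers n ≥ k ≥ 0. Then F((p-1)/2, (p-1)/2) ≡ (-1)^{(p-1)/2} · p · (1 - p·q_p(2) + p^2·q_p(2)^2 - p^3·q_p(2)^3 - (7/12)·p^3·B_{p-3}) modulo p^5 (as rational numbers). -/

import Mathlib

/-- Two rationals `a` and `b` are congruent modulo `p^r`:
the `p`-adic valuation of `a - b` is at least `r`, i.e. `a - b = c * p^r`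
with the denominator of `c` not divisible by `p`. -/
def ratCongr (p r : ℕ) (a b : ℚ) : Prop :=
  ∃ c : ℚ, a - b = c * (p : ℚ) ^ r ∧ ¬ (p ∣ c.den)

/-- The Fermat quotient `q_p(2) = (2^(p-1) - 1)/p` (an integer for odd primes),
viewed as a rational number. -/
def fermatQ (p : ℕ) : ℚ := ((2 : ℚ) ^ (p - 1) - 1) / p

/-- The WZ-pair function `F(n,k)`; it vanishes for `n < k`. -/
def F (n k : ℕ) : ℚ :=
  if k ≤ n then
    (6 * (n : ℚ) - 2 * k + 1) / 2 ^ (8 * n - 2 * k) *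
      (((2 * n).choose n : ℚ) * ((2 * n + 2 * k).choose (n + k)) *
        ((2 * n - 2 * k).choose (n - k)) * ((n + k).choose n)) /
      ((2 * k).choose k)
  else 0


open Finset

/-- The ring of `p`-integral rational numbers. -/
noncomputable abbrev pIntegers (p : ℕ) [Fact p.Prime] : Subring ℚ :=
  (Rat.padicValuation p).integer

section pIntegers

variable {p : ℕ} [Fact p.Prime]

lemma mem_pIntegers_iff {x : ℚ} : x ∈ pIntegers p ↔ ¬ p ∣ x.den :=
  Rat.padicValuation_le_one_iff

@[simp, norm_cast]
lemma pIntegers_coe_ofNat (n : ℕ) [n.AtLeastTwo] :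
    ((ofNat(n) : pIntegers p) : ℚ) = ofNat(n) := rfl

lemma ratCongr_iff {r : ℕ} {a b : ℚ} :
    ratCongr p r a b ↔ ∃ c : pIntegers p, a - b = c * (p : ℚ) ^ r := by
  constructor
  · rintro ⟨c, h, hc⟩
    exact ⟨⟨c, mem_pIntegers_iff.2 hc⟩, h⟩
  · rintro ⟨⟨c, hc⟩, h⟩
    exact ⟨c, h, mem_pIntegers_iff.1 hc⟩

lemma inv_natCast_mem_pIntegers {n : ℕ} (h : ¬ p ∣ n) : (n : ℚ)⁻¹ ∈ pIntegers p := by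
  rw [mem_pIntegers_iff, Rat.inv_natCast_den]
  split_ifs with h0
  · simp [h0] at h
  · exact h

lemma ratCongr.sum {ι : Type*} {s : Finset ι} {r : ℕ} {f g : ι → ℚ}
    (h : ∀ i ∈ s, ratCongr p r (f i) (g i)) :
    ratCongr p r (∑ i ∈ s, f i) (∑ i ∈ s, g i) := by
  simp only [ratCongr_iff] at h ⊢
  choose! c hc using h
  exact ⟨∑ i ∈ s, c i, by
    rw [← sum_sub_distrib, sum_congr rfl hc]; push_cast; rw [sum_mul]⟩

lemma ratCongr.prod_one_add {ι : Type*} (s : Finset ι) {a : ι → ℚ}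
    (h : ∀ i ∈ s, a i ∈ pIntegers p) :
    ratCongr p 4 (∏ i ∈ s, (1 + (p : ℚ) ^ 2 * a i)) (1 + (p : ℚ) ^ 2 * ∑ i ∈ s, a i) := by
  classical
  rw [ratCongr_iff]
  induction s using Finset.induction_on with
  | empty => exact ⟨0, by simp⟩
  | insert i s hi ih =>
    obtain ⟨c, hc⟩ := ih fun j hj => h j (mem_insert_of_mem hj)
    have hs : ∑ j ∈ s, a j ∈ pIntegers p := sum_mem fun j hj => h j (mem_insert_of_mem hj)
    lift ∑ j ∈ s, a j to pIntegers p using hs with S hS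
    have ha := h i (mem_insert_self _ _)
    rw [prod_insert hi, sum_insert hi, ← hS]
    lift a i to pIntegers p using ha with b
    exact ⟨c * (1 + p ^ 2 * b) + S * b, by
      push_cast; linear_combination (1 + (p : ℚ) ^ 2 * b) * hc⟩

end pIntegers

section Reflection

variable {M : Type*} [CommMonoid M]

lemma prod_range_two_mul_eq_prod_pairs (m : ℕ) (f : ℕ → M) :
    ∏ i ∈ range (2 * m), f (i + 1) = ∏ i ∈ range m, (f (i + 1) * f (2 * m + 1 - (i + 1))) := by
  rw [prod_mul_distrib, two_mul, prod_range_add]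
  congr 1
  rw [← prod_range_reflect]
  exact prod_congr rfl fun i hi => by
    have := mem_range.1 hi
    congr 1
    omega

lemma prod_range_odd_reflect (m : ℕ) (f : ℕ → M) :
    ∏ i ∈ range m, f (2 * m + 1 - 2 * (i + 1)) = ∏ i ∈ range m, f (2 * i + 1) := by
  rw [← prod_range_reflect]
  exact prod_congr rfl fun i hi => by
    have := mem_range.1 hi
    congr 1
    omega

lemma prod_range_two_mul_eq_prod_even_odd (m : ℕ) (f : ℕ → M) :
    ∏ i ∈ range (2 * m), f (i + 1) =
      ∏ i ∈ range m, (f (2 * (i + 1)) * f (2 * m + 1 - 2 * (i + 1))) := by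
  rw [prod_mul_distrib, prod_range_odd_reflect, ← prod_mul_distrib]
  induction m with
  | zero => simp
  | succ m ih =>
    rw [prod_range_succ, ← ih, mul_add, mul_one, prod_range_succ, prod_range_succ, mul_assoc,
      mul_comm (f (2 * m + 1))]

lemma sum_pairs_eq_sum_even_odd {A : Type*} [AddCommMonoid A] (m : ℕ) (f : ℕ → A) :
    ∑ i ∈ range m, (f (i + 1) + f (2 * m + 1 - (i + 1))) =
      ∑ i ∈ range m, (f (2 * (i + 1)) + f (2 * m + 1 - 2 * (i + 1))) :=
  (prod_range_two_mul_eq_prod_pairs (M := Multiplicative A) m f).symm.trans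
    (prod_range_two_mul_eq_prod_even_odd (M := Multiplicative A) m f)

lemma sum_range_two_mul_eq_sum_pairs {A : Type*} [AddCommMonoid A] (m : ℕ) (f : ℕ → A) :
    ∑ i ∈ range (2 * m), f (i + 1) = ∑ i ∈ range m, (f (i + 1) + f (2 * m + 1 - (i + 1))) :=
  prod_range_two_mul_eq_prod_pairs (M := Multiplicative A) m f

end Reflection

section Binomial

lemma choose_add_eq_prod (n k : ℕ) :
    ((n + k).choose k : ℚ) = ∏ i ∈ range k, (1 + (n : ℚ) / ((i + 1 : ℕ) : ℚ)) := by
  induction k with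
  | zero => simp
  | succ k ih =>
    rw [prod_range_succ, ← ih]
    have h : ((n + k + 1 : ℕ) : ℚ) * (n + k).choose k
        = (n + k + 1).choose (k + 1) * ((k + 1 : ℕ) : ℚ) := by
      exact_mod_cast Nat.add_one_mul_choose_eq (n + k) k
    have hk : ((k + 1 : ℕ) : ℚ) ≠ 0 := by positivity
    rw [← add_assoc]
    field_simp
    push_cast at h ⊢
    linear_combination -h

lemma choose_eq_prod (n k : ℕ) (h : k ≤ n) :
    (n.choose k : ℚ) = (-1) ^ k * ∏ i ∈ range k, (1 - ((n + 1 : ℕ) : ℚ) / ((i + 1 : ℕ) : ℚ)) := by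
  induction k with
  | zero => simp
  | succ k ih =>
    have e := ih (by omega)
    have h : ((n.choose (k + 1) : ℕ) : ℚ) * ((k + 1 : ℕ) : ℚ) = n.choose k * (n - k) := by
      rw [← Nat.cast_sub (by omega : k ≤ n)]
      exact_mod_cast Nat.choose_succ_right_eq n k
    have hk : ((k + 1 : ℕ) : ℚ) ≠ 0 := by positivity
    rw [prod_range_succ, pow_succ]
    have : (1 - ((n + 1 : ℕ) : ℚ) / ((k + 1 : ℕ) : ℚ)) = -((n - k) / ((k + 1 : ℕ) : ℚ)) := by
      field_simp
      push_cast
      ring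
    rw [this, eq_div_of_mul_eq hk h, e]
    ring

lemma centralBinom_eq_prod (m : ℕ) :
    ((2 * m).choose m : ℚ) =
      (-1) ^ m * 4 ^ m * ∏ i ∈ range m, (1 - ((2 * m + 1 : ℕ) : ℚ) / (2 * ((i + 1 : ℕ) : ℚ))) := by
  have h1 : ∀ k : ℕ, (k.centralBinom : ℚ) =
      4 ^ k * ((∏ i ∈ range k, ((2 * i + 1 : ℕ) : ℚ)) / ∏ i ∈ range k, (2 * ((i + 1 : ℕ) : ℚ))) := by
    intro k
    induction k with
    | zero => simp
    | succ k ih =>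
      have h : ((k + 1 : ℕ) : ℚ) * ((k + 1).centralBinom : ℚ)
          = 2 * (2 * k + 1) * k.centralBinom := by
        exact_mod_cast Nat.succ_mul_centralBinom_succ k
      have hk : ((k + 1 : ℕ) : ℚ) ≠ 0 := by positivity
      rw [eq_div_of_mul_eq hk ((mul_comm _ _).trans h), ih, prod_range_succ, prod_range_succ,
        mul_div_mul_comm]
      push_cast
      field_simp
      ring
  rw [← Nat.centralBinom_eq_two_mul_choose, h1, ← prod_range_odd_reflect m (fun j => (j : ℚ)), ← prod_div_distrib]
  have : ∀ i ∈ range m, ((2 * m + 1 - 2 * (i + 1) : ℕ) : ℚ) / (2 * ((i + 1 : ℕ) : ℚ)) =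
      -1 * (1 - ((2 * m + 1 : ℕ) : ℚ) / (2 * ((i + 1 : ℕ) : ℚ))) := by
    intro i hi
    have := mem_range.1 hi
    rw [Nat.cast_sub (by omega)]
    push_cast
    field_simp
    ring
  rw [prod_congr rfl this, prod_mul_distrib]
  simp
  ring

end Binomial

section HalfSums

/-- The sum of `k`-th powers of reciprocals of `1, …, m`. -/
def halfHarmonic (m k : ℕ) : ℚ := ∑ i ∈ range m, (((i + 1 : ℕ) : ℚ)⁻¹) ^ k

variable {p : ℕ} [hp : Fact p.Prime]

lemma exists_inv_pIntegers {n : ℕ} (h0 : 0 < n) (hn : n < p) :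
    ∃ a b : pIntegers p, (a : ℚ) = (n : ℚ)⁻¹ ∧ (b : ℚ) = ((p - n : ℕ) : ℚ)⁻¹ ∧
      (b : ℚ) = -a + p * a * b := by
  refine ⟨⟨_, inv_natCast_mem_pIntegers (Nat.not_dvd_of_pos_of_lt h0 hn)⟩,
    ⟨_, inv_natCast_mem_pIntegers
      (Nat.not_dvd_of_pos_of_lt (Nat.sub_pos_of_lt hn) (Nat.sub_lt (h0.trans hn) h0))⟩,
    rfl, rfl, ?_⟩
  have h1 : (n : ℚ) ≠ 0 := by positivity
  have h2 : ((p - n : ℕ) : ℚ) ≠ 0 := by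
    have := Nat.sub_pos_of_lt hn
    positivity
  simp only
  field_simp
  rw [Nat.cast_sub hn.le]
  ring

lemma ratCongr_inv_sub_sq {n : ℕ} (h0 : 0 < n) (hn : n < p) :
    ratCongr p 2 ((((p - n : ℕ) : ℚ)⁻¹) ^ 2) ((n : ℚ)⁻¹ ^ 2 + 2 * p * (n : ℚ)⁻¹ ^ 3) := by
  obtain ⟨a, b, ha, hb, hab⟩ := exists_inv_pIntegers h0 hn
  rw [← ha, ← hb, ratCongr_iff]
  refine ⟨a ^ 4 - 2 * a ^ 2 * b * (a + p * a ^ 2) + p ^ 2 * a ^ 4 * b ^ 2, ?_⟩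
  have h : (b : ℚ) = -a - p * a ^ 2 + p ^ 2 * a ^ 2 * b := by
    linear_combination (1 + p * (a : ℚ)) * hab
  push_cast
  linear_combination ((b : ℚ) + (-a - p * a ^ 2 + p ^ 2 * a ^ 2 * b)) * h

lemma ratCongr_halfHarmonic_two {m : ℕ} (hpm : p = 2 * m + 1) (hp3 : 3 < p) :
    ratCongr p 2 (halfHarmonic m 2) (-(7 / 6) * p * halfHarmonic m 3) := by
  have e := sum_pairs_eq_sum_even_odd m (fun i => ((i : ℚ)⁻¹) ^ 2)
  rw [← hpm] at e
  have h1 : ratCongr p 2 (∑ i ∈ range m, ((((i + 1 : ℕ) : ℚ)⁻¹) ^ 2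
        + (((p - (i + 1) : ℕ) : ℚ)⁻¹) ^ 2))
      (∑ i ∈ range m, (2 * (((i + 1 : ℕ) : ℚ)⁻¹) ^ 2 + 2 * p * (((i + 1 : ℕ) : ℚ)⁻¹) ^ 3)) := by
    refine ratCongr.sum fun i hi => ?_
    have := mem_range.1 hi
    obtain ⟨c, hc⟩ := ratCongr_iff.1
      (ratCongr_inv_sub_sq (p := p) (n := i + 1) (by omega) (by omega))
    exact ratCongr_iff.2 ⟨c, by linear_combination hc⟩
  have h2 : ratCongr p 2 (∑ i ∈ range m, ((((2 * (i + 1) : ℕ) : ℚ)⁻¹) ^ 2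
        + (((p - 2 * (i + 1) : ℕ) : ℚ)⁻¹) ^ 2))
      (∑ i ∈ range m, ((1 / 2) * (((i + 1 : ℕ) : ℚ)⁻¹) ^ 2
        + (p / 4) * (((i + 1 : ℕ) : ℚ)⁻¹) ^ 3)) := by
    refine ratCongr.sum fun i hi => ?_
    have := mem_range.1 hi
    obtain ⟨c, hc⟩ := ratCongr_iff.1
      (ratCongr_inv_sub_sq (p := p) (n := 2 * (i + 1)) (by omega) (by omega))
    refine ratCongr_iff.2 ⟨c, ?_⟩
    rw [Nat.cast_mul 2 (i + 1), mul_inv] at hc ⊢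
    push_cast at hc ⊢
    linear_combination hc
  rw [e] at h1
  simp only [sum_add_distrib, ← mul_sum] at h1 h2
  simp only [← sum_add_distrib] at h1 h2
  have h6 : ((6 : ℕ) : ℚ)⁻¹ ∈ pIntegers p := by
    refine inv_natCast_mem_pIntegers fun h => ?_
    have h' : p ∣ 2 * 3 := h
    rcases hp.out.dvd_mul.1 h' with h | h <;> have := Nat.le_of_dvd (by norm_num) h <;> omega
  obtain ⟨c, hc⟩ := ratCongr_iff.1 h1
  obtain ⟨d, hd⟩ := ratCongr_iff.1 h2
  refine ratCongr_iff.2 ⟨⟨_, h6⟩ * 4 * (d - c), ?_⟩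
  push_cast
  rw [halfHarmonic, halfHarmonic]
  linear_combination (2 / 3) * (hd - hc)

end HalfSums

section BernoulliSums

variable {p : ℕ} [hp : Fact p.Prime]

lemma bernoulli_mem_pIntegers {n : ℕ} (hn : n + 1 < p) : bernoulli n ∈ pIntegers p := by
  induction n using Nat.strong_induction_on with
  | _ n ih =>
    have h := sum_bernoulli (n + 1)
    rw [sum_range_succ, Nat.choose_succ_self_right] at h
    have hn0 : ((n + 1 : ℕ) : ℚ) ≠ 0 := by positivity
    have e : bernoulli n = ((n + 1 : ℕ) : ℚ)⁻¹ * ((if n + 1 = 1 then 1 else 0) -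
        ∑ k ∈ range n, ((n + 1).choose k : ℚ) * bernoulli k) := by
      rw [← h]
      field_simp
      ring
    rw [e]
    refine mul_mem (inv_natCast_mem_pIntegers (Nat.not_dvd_of_pos_of_lt n.succ_pos hn))
      (sub_mem ?_ (sum_mem fun k hk => mul_mem (natCast_mem _ _) ?_))
    · split_ifs
      · exact one_mem _
      · exact zero_mem _
    · have := mem_range.1 hk
      exact ih k this (by omega)

lemma ratCongr_sum_range_pow {n : ℕ} (hn : n + 1 < p) :
    ratCongr p 2 (∑ k ∈ range p, (k : ℚ) ^ n) (p * bernoulli n) := by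
  rw [sum_range_pow, sum_range_succ]
  have hn0 : ((n + 1 : ℕ) : ℚ) ≠ 0 := by positivity
  have hinv := inv_natCast_mem_pIntegers (Nat.not_dvd_of_pos_of_lt n.succ_pos hn)
  have h : ∀ i ∈ range n, ratCongr p 2
      (bernoulli i * ((n + 1).choose i) * (p : ℚ) ^ (n + 1 - i) / (n + 1)) 0 := by
    intro i hi
    have hi := mem_range.1 hi
    rw [ratCongr_iff]
    refine ⟨⟨_, bernoulli_mem_pIntegers (by omega : i + 1 < p)⟩ * ((n + 1).choose i) *
      p ^ (n - 1 - i) * ⟨_, hinv⟩, ?_⟩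
    rw [show n + 1 - i = (n - 1 - i) + 2 by omega]
    push_cast
    rw [pow_add]
    ring
  obtain ⟨c, hc⟩ := ratCongr_iff.1 (ratCongr.sum h)
  refine ratCongr_iff.2 ⟨c, ?_⟩
  rw [← hc, Nat.choose_succ_self_right, show n + 1 - n = 1 by omega]
  push_cast at hn0 ⊢
  field_simp
  simp

lemma ratCongr_sub_pow {n x : ℕ} (hx : x ≤ p) (hn : Even n) :
    ratCongr p 2 (((p - x : ℕ) : ℚ) ^ n) ((x : ℚ) ^ n - n * p * (x : ℚ) ^ (n - 1)) := by
  rcases Nat.eq_zero_or_pos n with rfl | hn0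
  · exact ratCongr_iff.2 ⟨0, by simp⟩
  obtain ⟨k, hk⟩ := Polynomial.powAddExpansion (-x : ℤ) (p : ℤ) n
  have hk' : (-x + p : ℚ) ^ n = (-x) ^ n + n * (-x) ^ (n - 1) * p + k * p ^ 2 := by
    exact_mod_cast hk
  have ho : Odd (n - 1) := Nat.Even.sub_odd hn0 hn odd_one
  rw [hn.neg_pow, ho.neg_pow] at hk'
  refine ratCongr_iff.2 ⟨k, ?_⟩
  rw [Nat.cast_sub hx]
  push_cast
  linear_combination hk'

lemma ratCongr_pow_sub_one {n : ℕ} (h : ¬ p ∣ n) : ratCongr p 1 ((n : ℚ) ^ (p - 1)) 1 := by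
  have := Int.ModEq.pow_card_sub_one_eq_one hp.out
    (n := (n : ℤ)) ((Nat.isCoprime_iff_coprime.2 ((hp.out.coprime_iff_not_dvd.2 h).symm)))
  obtain ⟨c, hc⟩ := this.symm.dvd
  refine ratCongr_iff.2 ⟨c, ?_⟩
  have hc' : (n : ℚ) ^ (p - 1) - 1 = p * c := by exact_mod_cast hc
  rw [hc']
  push_cast
  ring

lemma ratCongr_halfHarmonic_three {m : ℕ} (hpm : p = 2 * m + 1) (hp3 : 3 < p) :
    ratCongr p 1 (halfHarmonic m 3) (-2 * bernoulli (p - 3)) := by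
  obtain ⟨n, hn⟩ : ∃ n, p = n + 4 := ⟨p - 4, by omega⟩
  have hev : Even (n + 1) := ⟨m - 1, by omega⟩
  rw [show p - 3 = n + 1 by omega]
  have hS := ratCongr_sum_range_pow (p := p) (n := n + 1) (by omega)
  rw [show range p = range (2 * m + 1) by rw [hpm], sum_range_succ'] at hS
  simp only [Nat.cast_zero, ne_eq, Nat.add_eq_zero_iff, one_ne_zero, and_false, not_false_eq_true,
    zero_pow, add_zero] at hS
  have e1 := sum_range_two_mul_eq_sum_pairs m (fun i => (i : ℚ) ^ (n + 1))
  have e2 := sum_pairs_eq_sum_even_odd m (fun i => (i : ℚ) ^ (n + 1))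
  rw [← hpm] at e1 e2
  have h1 : ratCongr p 2 (∑ i ∈ range m, (((i + 1 : ℕ) : ℚ) ^ (n + 1)
        + ((p - (i + 1) : ℕ) : ℚ) ^ (n + 1)))
      (∑ i ∈ range m, (2 * ((i + 1 : ℕ) : ℚ) ^ (n + 1)
        + (-((n + 1) * p)) * ((i + 1 : ℕ) : ℚ) ^ n)) := by
    refine ratCongr.sum fun i hi => ?_
    have := mem_range.1 hi
    obtain ⟨c, hc⟩ := ratCongr_iff.1
      (ratCongr_sub_pow (p := p) (n := n + 1) (x := i + 1) (by omega) hev)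
    refine ratCongr_iff.2 ⟨c, ?_⟩
    rw [Nat.add_sub_cancel] at hc
    push_cast at hc ⊢
    linear_combination hc
  have h2 : ratCongr p 2 (∑ i ∈ range m, (((2 * (i + 1) : ℕ) : ℚ) ^ (n + 1)
        + ((p - 2 * (i + 1) : ℕ) : ℚ) ^ (n + 1)))
      (∑ i ∈ range m, (2 * 2 ^ (n + 1) * ((i + 1 : ℕ) : ℚ) ^ (n + 1)
        + (-((n + 1) * p * 2 ^ n)) * ((i + 1 : ℕ) : ℚ) ^ n)) := by
    refine ratCongr.sum fun i hi => ?_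
    have := mem_range.1 hi
    obtain ⟨c, hc⟩ := ratCongr_iff.1
      (ratCongr_sub_pow (p := p) (n := n + 1) (x := 2 * (i + 1)) (by omega) hev)
    refine ratCongr_iff.2 ⟨c, ?_⟩
    rw [Nat.add_sub_cancel, Nat.cast_mul 2 (i + 1), mul_pow, mul_pow] at hc
    rw [Nat.cast_mul 2 (i + 1), mul_pow]
    push_cast at hc ⊢
    linear_combination hc
  have h3 : ratCongr p 1 (∑ i ∈ range m, ((i + 1 : ℕ) : ℚ) ^ n) (halfHarmonic m 3) := by
    refine ratCongr.sum fun i hi => ?_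
    have hi := mem_range.1 hi
    have hd : ¬ p ∣ i + 1 := Nat.not_dvd_of_pos_of_lt i.succ_pos (by omega)
    obtain ⟨c, hc⟩ := ratCongr_iff.1 (ratCongr_pow_sub_one hd)
    refine ratCongr_iff.2 ⟨c * ⟨_, inv_natCast_mem_pIntegers hd⟩ ^ 3, ?_⟩
    have hi0 : ((i + 1 : ℕ) : ℚ) ≠ 0 := by positivity
    rw [show p - 1 = n + 3 by omega] at hc
    simp only [Subring.coe_mul, Subring.coe_pow]
    generalize ((i + 1 : ℕ) : ℚ) = x at *
    field_simp
    linear_combination hc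
  have h2d : ¬ p ∣ 2 := Nat.not_dvd_of_pos_of_lt two_pos (by omega)
  have h3d : ¬ p ∣ 3 := Nat.not_dvd_of_pos_of_lt three_pos (by omega)
  obtain ⟨f, hf⟩ := ratCongr_iff.1 (ratCongr_pow_sub_one h2d)
  rw [show p - 1 = n + 3 by omega] at hf
  rw [e1] at hS
  rw [← e2] at h2
  simp only [sum_add_distrib, ← mul_sum] at h1 h2 hS
  simp only [← sum_add_distrib] at h1 h2 hS
  have hT : ∑ i ∈ range m, ((i + 1 : ℕ) : ℚ) ^ n ∈ pIntegers p :=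
    sum_mem fun i _ => pow_mem (natCast_mem _ _) n
  have hB := bernoulli_mem_pIntegers (p := p) (n := n + 1) (by omega)
  generalize ∑ i ∈ range m, ((i + 1 : ℕ) : ℚ) ^ n = T at *
  generalize ∑ i ∈ range m, ((i + 1 : ℕ) : ℚ) ^ (n + 1) = T' at *
  generalize halfHarmonic m 3 = H at *
  generalize bernoulli (n + 1) = B at *
  generalize ∑ i ∈ range m, (((i + 1 : ℕ) : ℚ) ^ (n + 1) + ((p - (i + 1) : ℕ) : ℚ) ^ (n + 1)) = S
    at *
  lift T to pIntegers p using hT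
  lift B to pIntegers p using hB
  obtain ⟨s, hS⟩ := ratCongr_iff.1 hS
  obtain ⟨c, h1⟩ := ratCongr_iff.1 h1
  obtain ⟨d, h2⟩ := ratCongr_iff.1 h2
  obtain ⟨t, h3⟩ := ratCongr_iff.1 h3
  have hp0 : (p : ℚ) ≠ 0 := by exact_mod_cast hp.out.ne_zero
  have hn' : (p : ℚ) = n + 4 := by exact_mod_cast hn
  -- eliminate the even power sum and divide by `p`
  have key : (2 ^ (n + 1) - 1) * (B : ℚ) + (n + 1) * 2 ^ n * T =
      (2 ^ (n + 1) * c - d - (2 ^ (n + 1) - 1) * s) * p := by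
    apply mul_left_cancel₀ hp0
    linear_combination 2 ^ (n + 1) * h1 - h2 - (2 ^ (n + 1) - 1) * hS
  refine ratCongr_iff.2 ⟨⟨_, inv_natCast_mem_pIntegers h3d⟩ * (2 * f * B + (1 + f * p) * T - 3 * f * T
    - 8 * (2 ^ (n + 1) * c - d - (2 ^ (n + 1) - 1) * s)) - t, ?_⟩
  push_cast at hf ⊢
  rw [pow_succ] at key ⊢
  rw [pow_add] at hf
  have hn'' : (n : ℚ) = p - 4 := by linear_combination -hn'
  rw [hn''] at key
  linear_combination (-8 / 3) * key - h3 + ((2 / 3) * (B : ℚ) + (p - 3) / 3 * T) * hf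

end BernoulliSums

section BinomialCongruences

variable {p : ℕ} [hp : Fact p.Prime]

lemma inv_twentyFour_mem_pIntegers (hp3 : 3 < p) : ((24 : ℕ) : ℚ)⁻¹ ∈ pIntegers p := by
  refine inv_natCast_mem_pIntegers fun h => ?_
  have h' : p ∣ 2 ^ 3 * 3 := h
  rcases hp.out.dvd_mul.1 h' with h | h
  · have := Nat.le_of_dvd (by norm_num) (hp.out.dvd_of_dvd_pow h)
    omega
  · have := Nat.le_of_dvd (by norm_num) h
    omega

/-- Wolstenholme's theorem modulo `p ^ 4`. -/
lemma ratCongr_choose_two_mul_sub_one {m : ℕ} (hpm : p = 2 * m + 1) (hp3 : 3 < p) :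
    ratCongr p 4 ((p + 2 * m).choose (2 * m)) (1 - 2 / 3 * p ^ 3 * bernoulli (p - 3)) := by
  rw [choose_add_eq_prod,
    prod_range_two_mul_eq_prod_pairs m (fun j => 1 + (p : ℚ) / (j : ℚ)), ← hpm]
  have hterm : ∀ i ∈ range m, ∃ a b : pIntegers p, (a : ℚ) = ((i + 1 : ℕ) : ℚ)⁻¹ ∧
      (1 + (p : ℚ) / ((i + 1 : ℕ) : ℚ)) * (1 + (p : ℚ) / ((p - (i + 1) : ℕ) : ℚ)) =
        1 + (p : ℚ) ^ 2 * ((2 * a * b : pIntegers p) : ℚ) ∧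
      (b : ℚ) = -a + p * a * b := by
    intro i hi
    have := mem_range.1 hi
    obtain ⟨a, b, ha, hb, hab⟩ := exists_inv_pIntegers (p := p) (n := i + 1) (by omega) (by omega)
    refine ⟨a, b, ha, ?_, hab⟩
    rw [div_eq_mul_inv, div_eq_mul_inv, ← ha, ← hb]
    push_cast
    linear_combination (p : ℚ) * hab
  choose! a b ha hterm hab using hterm
  rw [prod_congr rfl hterm]
  obtain ⟨c, hc⟩ := ratCongr_iff.1 (ratCongr.prod_one_add (range m)
    (a := fun i => ((2 * a i * b i : pIntegers p) : ℚ)) fun i _ => Subtype.coe_prop _)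
  have hsum : ratCongr p 2 (∑ i ∈ range m, ((2 * a i * b i : pIntegers p) : ℚ))
      (∑ i ∈ range m, ((-2) * (((i + 1 : ℕ) : ℚ)⁻¹) ^ 2
        + (-2 * p) * (((i + 1 : ℕ) : ℚ)⁻¹) ^ 3)) := by
    refine ratCongr.sum fun i hi => ratCongr_iff.2 ⟨2 * (a i) ^ 3 * b i, ?_⟩
    rw [← ha i hi]
    push_cast
    linear_combination (2 * (a i : ℚ) + 2 * p * (a i : ℚ) ^ 2) * hab i hi
  rw [sum_add_distrib, ← mul_sum, ← mul_sum] at hsum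
  obtain ⟨d, hd⟩ := ratCongr_iff.1 hsum
  change _ - (-2 * halfHarmonic m 2 + -2 * (p : ℚ) * halfHarmonic m 3) = _ at hd
  obtain ⟨e, he⟩ := ratCongr_iff.1 (ratCongr_halfHarmonic_two hpm hp3)
  obtain ⟨f, hf⟩ := ratCongr_iff.1 (ratCongr_halfHarmonic_three hpm hp3)
  refine ratCongr_iff.2 ⟨c + d - 2 * e + 8 * ⟨_, inv_twentyFour_mem_pIntegers hp3⟩ * f, ?_⟩
  push_cast at hc hd ⊢
  linear_combination hc + (p : ℚ) ^ 2 * hd - 2 * (p : ℚ) ^ 2 * he + (p : ℚ) ^ 3 / 3 * hf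

/-- Morley's congruence modulo `p ^ 4`, in factored form. -/
lemma exists_choose_half_eq {m : ℕ} (hpm : p = 2 * m + 1) (hp3 : 3 < p) :
    ∃ d : ℚ, ((2 * m).choose m : ℚ) = (-1) ^ m * (4 ^ m) ^ 2 * d ∧
      ratCongr p 4 d (1 + 1 / 12 * p ^ 3 * bernoulli (p - 3)) := by
  have h1 := choose_eq_prod (2 * m) m (by omega)
  have h2 := centralBinom_eq_prod m
  rw [← hpm] at h1 h2
  have h24 := inv_twentyFour_mem_pIntegers hp3
  have h4 : (1 / 4 : ℚ) ∈ pIntegers p := by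
    have := mul_mem (natCast_mem (pIntegers p) 6) h24
    norm_num at this ⊢
    exact this
  have hterm : ∀ i ∈ range m, ∃ a b : pIntegers p, (a : ℚ) = ((i + 1 : ℕ) : ℚ)⁻¹ ∧
      (1 - (p : ℚ) / (2 * ((i + 1 : ℕ) : ℚ))) ^ 2 = (1 - (p : ℚ) / ((i + 1 : ℕ) : ℚ)) *
        (1 + (p : ℚ) ^ 2 * ((-⟨1 / 4, h4⟩ * a * b : pIntegers p) : ℚ)) ∧
      (b : ℚ) = -a + p * a * b := by
    intro i hi
    have := mem_range.1 hi
    obtain ⟨a, b, ha, hb, hab⟩ := exists_inv_pIntegers (p := p) (n := i + 1) (by omega) (by omega)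
    refine ⟨a, b, ha, ?_, hab⟩
    rw [div_eq_mul_inv, div_eq_mul_inv, mul_inv, ← ha]
    push_cast
    linear_combination (1 / 4) * (p : ℚ) ^ 2 * a * hab
  choose! a b ha hterm hab using hterm
  obtain ⟨c, hc⟩ := ratCongr_iff.1 (ratCongr.prod_one_add (range m)
    (a := fun i => ((-⟨1 / 4, h4⟩ * a i * b i : pIntegers p) : ℚ)) fun i _ => Subtype.coe_prop _)
  have hsum : ratCongr p 2 (∑ i ∈ range m, ((-⟨1 / 4, h4⟩ * a i * b i : pIntegers p) : ℚ))
      (∑ i ∈ range m, ((1 / 4) * (((i + 1 : ℕ) : ℚ)⁻¹) ^ 2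
        + (1 / 4 * p) * (((i + 1 : ℕ) : ℚ)⁻¹) ^ 3)) := by
    refine ratCongr.sum fun i hi => ratCongr_iff.2 ⟨-⟨1 / 4, h4⟩ * (a i) ^ 3 * b i, ?_⟩
    rw [← ha i hi]
    push_cast
    linear_combination (-(1 / 4) * (a i : ℚ) - 1 / 4 * p * (a i : ℚ) ^ 2) * hab i hi
  rw [sum_add_distrib, ← mul_sum, ← mul_sum] at hsum
  obtain ⟨d, hd⟩ := ratCongr_iff.1 hsum
  change _ - (1 / 4 * halfHarmonic m 2 + 1 / 4 * (p : ℚ) * halfHarmonic m 3) = _ at hd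
  obtain ⟨e, he⟩ := ratCongr_iff.1 (ratCongr_halfHarmonic_two hpm hp3)
  obtain ⟨f, hf⟩ := ratCongr_iff.1 (ratCongr_halfHarmonic_three hpm hp3)
  have hprod := prod_congr rfl hterm
  rw [prod_pow, prod_mul_distrib] at hprod
  refine ⟨∏ i ∈ range m, (1 + (p : ℚ) ^ 2 * ((-⟨1 / 4, h4⟩ * a i * b i : pIntegers p) : ℚ)), ?_,
    ratCongr_iff.2 ⟨c + d + ⟨1 / 4, h4⟩ * e - ⟨_, h24⟩ * f, ?_⟩⟩
  · have hne : ((2 * m).choose m : ℚ) ≠ 0 := by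
      exact_mod_cast (Nat.choose_pos (by omega)).ne'
    apply mul_left_cancel₀ hne
    generalize ∏ i ∈ range m, (1 + (p : ℚ) ^ 2 * ((-⟨1 / 4, h4⟩ * a i * b i : pIntegers p) : ℚ)) = P
      at *
    generalize ∏ i ∈ range m, (1 - (p : ℚ) / (2 * ((i + 1 : ℕ) : ℚ))) = g at *
    linear_combination (((2 * m).choose m : ℚ) + (-1) ^ m * 4 ^ m * g) * h2
      + ((-1 : ℚ) ^ m * 4 ^ m) ^ 2 * hprod - (-1) ^ m * (4 ^ m) ^ 2 * P * h1
  · push_cast at hc hd ⊢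
    linear_combination hc + (p : ℚ) ^ 2 * hd + (p : ℚ) ^ 2 / 4 * he - (p : ℚ) ^ 3 / 24 * hf

end BinomialCongruences

lemma F_self (m : ℕ) :
    F m m = (2 * m + 1) * ((2 * m + 1 + 2 * m).choose (2 * m)) * ((2 * m).choose m) /
      (4 ^ m) ^ 3 := by
  have hne : ((2 * m).choose m : ℚ) ≠ 0 := by
    exact_mod_cast (Nat.choose_pos (by omega)).ne'
  have h : ((2 * m + 2 * m).choose (2 * m) : ℚ) * (2 * m + 2 * m + 1) =
      (2 * m + 1 + 2 * m).choose (2 * m) * (2 * m + 1) := by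
    have h := Nat.choose_mul_succ_eq (2 * m + 2 * m) (2 * m)
    rw [show 2 * m + 2 * m + 1 - 2 * m = 2 * m + 1 by omega,
      show 2 * m + 2 * m + 1 = 2 * m + 1 + 2 * m by omega] at h
    push_cast [← @Nat.cast_inj ℚ] at h
    linear_combination h
  have hpow : (2 : ℚ) ^ (8 * m - 2 * m) = (4 ^ m) ^ 3 := by
    rw [show 8 * m - 2 * m = 2 * m * 3 by omega, pow_mul, pow_mul]
    norm_num
  rw [F, if_pos le_rfl, hpow, ← two_mul m, Nat.sub_self, Nat.sub_self]
  simp only [Nat.choose_self, Nat.cast_one, mul_one]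
  field_simp
  linear_combination h

theorem F_half_half_congr (p : ℕ) (hp : p.Prime) (hp3 : 3 < p) :
    ratCongr p 5 (F ((p - 1) / 2) ((p - 1) / 2))
      ((-1 : ℚ) ^ ((p - 1) / 2) * p *
        (1 - p * fermatQ p + (p : ℚ) ^ 2 * fermatQ p ^ 2 - (p : ℚ) ^ 3 * fermatQ p ^ 3 -
          (7 / 12) * (p : ℚ) ^ 3 * bernoulli (p - 3))) := by
  have := Fact.mk hp
  obtain ⟨m, hpm⟩ := hp.odd_of_ne_two (by omega)
  have hp0 : (p : ℚ) ≠ 0 := by exact_mod_cast hp.ne_zero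
  have h2d : ¬ p ∣ 2 := Nat.not_dvd_of_pos_of_lt two_pos (by omega)
  have hA : (2 : ℚ) ^ (p - 1) = 4 ^ m := by
    rw [show p - 1 = 2 * m by omega, pow_mul]
    norm_num
  obtain ⟨f, hf⟩ := ratCongr_iff.1 (ratCongr_pow_sub_one h2d)
  have hq : fermatQ p = f := by
    rw [fermatQ, div_eq_iff hp0]
    push_cast at hf
    linear_combination hf
  have hinv : ((4 : ℚ) ^ m)⁻¹ ∈ pIntegers p := by
    have h := inv_natCast_mem_pIntegers (n := 4 ^ m) fun h : p ∣ 4 ^ m =>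
      h2d (hp.dvd_of_dvd_pow (hp.dvd_of_dvd_pow h : p ∣ 2 ^ 2))
    exact_mod_cast h
  have hB := bernoulli_mem_pIntegers (p := p) (n := p - 3) (by omega)
  obtain ⟨w, hw⟩ := ratCongr_iff.1 (ratCongr_choose_two_mul_sub_one hpm hp3)
  obtain ⟨D, hC, hD⟩ := exists_choose_half_eq hpm hp3
  obtain ⟨d, hd⟩ := ratCongr_iff.1 hD
  rw [show (p - 1) / 2 = m by omega, F_self, hC, hq, ← hpm]
  have hpm' : (2 * m + 1 : ℚ) = p := by exact_mod_cast hpm.symm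
  have hf' : (4 : ℚ) ^ m = 1 + f * p := by
    push_cast at hf
    rw [← hA]
    linear_combination hf
  rw [hpm']
  have hA0 : (4 : ℚ) ^ m ≠ 0 := by positivity
  lift bernoulli (p - 3) to pIntegers p using hB with B
  generalize ((p + 2 * m).choose (2 * m) : ℚ) = W at *
  let t : pIntegers p := ⟨_, inv_twentyFour_mem_pIntegers hp3⟩
  refine ratCongr_iff.2 ⟨(-1) ^ m * ⟨_, hinv⟩ * (f ^ 4 + 14 * t * f * B - 32 * t ^ 2 * p ^ 2 * B ^ 2
    + w * (1 + 2 * t * p ^ 3 * B + d * p ^ 4) + (1 - 16 * t * p ^ 3 * B) * d), ?_⟩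
  have hW : W = 1 - 2 / 3 * p ^ 3 * B + w * p ^ 4 := by linear_combination hw
  have hD' : D = 1 + 1 / 12 * p ^ 3 * B + d * p ^ 4 := by linear_combination hd
  have ht : (t : ℚ) = 1 / 24 := by simp [t]
  push_cast
  rw [ht, hW, hD']
  field_simp
  rw [hf']
  ring
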